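/- Let θ be a cylindric diagram in C_ω. For any x ∈ θ and any standard tableau T ∈ LE(θ), writing n = T(x), one has hk(x) = s(T⁻¹(1)) s(T⁻¹(2)) ⋯ s(T⁻¹(n−1)) applied to α(T⁻¹(n)). -/

import Mathlib

/-!
The proof of `statement_6` peels off the first cell `p = T⁻¹(1)`, a minimal cell of `θ`. The set
`θ' = θ \ {p}` is again an order filter and the shifted enumeration is a standard tableau on it, so
by induction on `n` everything reduces to the identity `hk_θ(x) = s(p) hk_{θ'}(x)` for `x ∈ θ'`
(`hk_erase`).

If `x` has content `c` and its row and column contain `R` and `S` cells of `θ'` from `x` onwards,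
then `hk_{θ'}(x)` is the sum of the simple roots along the segment of contents
`c - (S - 1), …, c + (R - 1)` (`hk_eq`), and its pairing with `α_i^∨` telescopes
(`pairSimple_seg`) to
`[i = c + R - 1] - [i = c + R] + [i = c - (S - 1)] - [i = c - S]`.
Take `i = con p`. All cells of content `i` lie on the diagonal through `p`, because the kernel of
`con` is generated by `π(1,1)` (`con_eq_zero`). Minimality of `p` then shows (`end_spec`) that the
last cell of the row of `x` in `θ'` never has content `i`, and that the first cell beyond it has
content `i` exactly when it is `p`; likewise for the column. Hence the pairing is minus the number
of occurrences of `p` in the hook of `x` in `θ`, which is the required identity.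
-/


namespace CylPaper

/-! ## The cylinder and its order -/

abbrev Z2 : Type := ℤ × ℤ

/-- The partial order on ℤ²: (a,b) ≤ (c,d) iff a ≥ c and b ≥ d. -/
def le2 (x y : Z2) : Prop := y.1 ≤ x.1 ∧ y.2 ≤ x.2

/-- The period ω = (m, -ℓ). -/
def om (m l : ℕ) : Z2 := ((m : ℤ), -(l : ℤ))

/-- The cylinder C_ω = ℤ²/ℤω. -/
abbrev Cyl (m l : ℕ) : Type := Z2 ⧸ AddSubgroup.zmultiples (om m l)

/-- The natural projection π : ℤ² → C_ω. -/
def pr (m l : ℕ) : Z2 →+ Cyl m l := QuotientAddGroup.mk' _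

/-- The induced order relation on the cylinder: x ≤ y iff there are lifts with x̃ ≤ ỹ. -/
def cle (m l : ℕ) (x y : Cyl m l) : Prop :=
  ∃ a b : Z2, pr m l a = x ∧ pr m l b = y ∧ le2 a b

/-- A cylindric diagram: a non-trivial order filter of C_ω. -/
def IsCylindric (m l : ℕ) (θ : Set (Cyl m l)) : Prop :=
  θ.Nonempty ∧ θ ≠ Set.univ ∧ ∀ x ∈ θ, ∀ y, cle m l x y → y ∈ θ

/-- A periodic diagram of period ω: a non-trivial order filter of ℤ² with Θ + ω = Θ. -/
def IsPeriodic (m l : ℕ) (Θ : Set Z2) : Prop :=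
  Θ.Nonempty ∧ Θ ≠ Set.univ ∧ (∀ x ∈ Θ, ∀ y, le2 x y → y ∈ Θ) ∧
    (fun p => p + om m l) '' Θ = Θ

/-- A proper order ideal ξ of the sub-poset θ of C_ω. -/
def IsProperIdealOf (m l : ℕ) (θ ξ : Set (Cyl m l)) : Prop :=
  ξ ⊆ θ ∧ ξ ≠ θ ∧ ∀ x ∈ ξ, ∀ y ∈ θ, cle m l y x → y ∈ ξ

/-- A proper order ideal of the whole cylinder C_ω. -/
def IsProperIdealC (m l : ℕ) (J : Set (Cyl m l)) : Prop :=
  J ≠ Set.univ ∧ ∀ x ∈ J, ∀ y, cle m l y x → y ∈ J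

/-- A proper order filter of the whole cylinder C_ω. -/
def IsProperFilterC (m l : ℕ) (J : Set (Cyl m l)) : Prop :=
  J ≠ Set.univ ∧ ∀ x ∈ J, ∀ y, cle m l x y → y ∈ J

/-! ## The content map -/

/-- The content on ℤ²: (a,b) ↦ b - a mod κ (κ = m + ℓ). -/
def conHom (m l : ℕ) : Z2 →+ ZMod (m + l) where
  toFun p := ((p.2 - p.1 : ℤ) : ZMod (m + l))
  map_zero' := by simp
  map_add' a b := by
    simp only [Prod.fst_add, Prod.snd_add]
    push_cast
    ring

lemma conHom_om (m l : ℕ) : conHom m l (om m l) = 0 := by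
  have h : ((m + l : ℕ) : ZMod (m + l)) = 0 := ZMod.natCast_self _
  show ((((om m l).2 - (om m l).1 : ℤ)) : ZMod (m + l)) = 0
  simp only [om]
  push_cast at h ⊢
  linear_combination -h

/-- The content map con : C_ω → ℤ/κℤ. -/
def con (m l : ℕ) : Cyl m l →+ ZMod (m + l) :=
  QuotientAddGroup.lift _ (conHom m l) (by
    intro x hx
    obtain ⟨k, rfl⟩ := AddSubgroup.mem_zmultiples_iff.mp hx
    simp only [AddMonoidHom.mem_ker, map_zsmul, conHom_om, smul_zero])

/-! ## The affine root system of type A_{κ-1}^{(1)} -/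

/-- h*, with coordinates in the basis {α_i (i ∈ ℤ/κℤ), Λ₀}:
`(c, t)` stands for `Σ_i c_i α_i + t Λ₀`. -/
abbrev Hw (κ : ℕ) : Type := (ZMod κ → ℚ) × ℚ

/-- The affine Cartan matrix of type A_{κ-1}^{(1)} (valid for κ ≥ 2). -/
def cartan (κ : ℕ) (i j : ZMod κ) : ℚ :=
  (if i = j then 2 else 0) + (if i - j = 1 then -1 else 0) + (if i - j = -1 then -1 else 0)

/-- The simple root α_i. -/
def alphaR (κ : ℕ) (i : ZMod κ) : Hw κ := (Pi.single i 1, 0)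

/-- The null root δ = Σ_i α_i. -/
def deltaR (κ : ℕ) : Hw κ := (fun _ => 1, 0)

/-- The pairing ⟨ζ, α_i^∨⟩. -/
noncomputable def pairSimple (κ : ℕ) (ζ : Hw κ) (i : ZMod κ) : ℚ :=
  (∑ᶠ j, ζ.1 j * cartan κ i j) + ζ.2 * (if i = 0 then 1 else 0)

/-- The pairing ⟨ζ, β^∨⟩ where β = Σ_i k_i α_i lies in the root lattice,
so β^∨ = Σ_i k_i α_i^∨. -/
noncomputable def pairCo (κ : ℕ) (ζ β : Hw κ) : ℚ := ∑ᶠ i, β.1 i * pairSimple κ ζ i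

/-- The simple reflection s_i : ζ ↦ ζ - ⟨ζ, α_i^∨⟩ α_i, as a map on h*. -/
noncomputable def sFun (κ : ℕ) (i : ZMod κ) (ζ : Hw κ) : Hw κ :=
  ζ - pairSimple κ ζ i • alphaR κ i

/-- The element s_{i₁} s_{i₂} ⋯ s_{i_r} of the affine Weyl group
given by a word [i₁, i₂, …, i_r]. -/
noncomputable def wordProd (κ : ℕ) (L : List (ZMod κ)) : Hw κ → Hw κ :=
  (L.map (sFun κ)).foldr (· ∘ ·) id

/-- Membership in the affine Weyl group W (generated by the s_i). -/
def Wmem (κ : ℕ) (w : Hw κ → Hw κ) : Prop := ∃ L : List (ZMod κ), wordProd κ L = w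

/-- The Coxeter length: the least r such that w is a product of r simple reflections. -/
noncomputable def len (κ : ℕ) (w : Hw κ → Hw κ) : ℕ :=
  sInf {r : ℕ | ∃ L : List (ZMod κ), L.length = r ∧ wordProd κ L = w}

/-- Q₊ = Σ_i ℤ≥0 α_i. -/
def QPos (κ : ℕ) : Set (Hw κ) := {x | x.2 = 0 ∧ ∀ i, ∃ n : ℕ, x.1 i = (n : ℚ)}

/-- The set R = WΠ of real roots. -/
def Rset (κ : ℕ) : Set (Hw κ) :=
  {β | ∃ (L : List (ZMod κ)) (i : ZMod κ), β = wordProd κ L (alphaR κ i)}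

/-- Positive real roots R₊ = R ∩ Q₊. -/
def Rpos (κ : ℕ) : Set (Hw κ) := Rset κ ∩ QPos κ

/-- Negative real roots R₋ = -R₊. -/
def Rneg (κ : ℕ) : Set (Hw κ) := {β | -β ∈ Rpos κ}

/-- The inversion set R(w) = R₊ ∩ w R₋. -/
def invSet (κ : ℕ) (w : Hw κ → Hw κ) : Set (Hw κ) := Rpos κ ∩ (w '' Rneg κ)

/-- The weak right Bruhat order on W. -/
def wble (κ : ℕ) (v w : Hw κ → Hw κ) : Prop :=
  Relation.ReflTransGen
    (fun u u' => ∃ i : ZMod κ, u' = u ∘ sFun κ i ∧ len κ u' = len κ u + 1) v w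

/-- The weak Bruhat interval [e, w]. -/
def bint (κ : ℕ) (w : Hw κ → Hw κ) : Set (Hw κ → Hw κ) :=
  {x | wble κ id x ∧ wble κ x w}

/-- A single commutation move on words: swap adjacent letters i, j with i - j ≠ 0, ±1. -/
def CommMove (κ : ℕ) (L1 L2 : List (ZMod κ)) : Prop :=
  ∃ (u v : List (ZMod κ)) (i j : ZMod κ),
    i - j ≠ 0 ∧ i - j ≠ 1 ∧ i - j ≠ -1 ∧
    L1 = u ++ i :: j :: v ∧ L2 = u ++ j :: i :: v

/-- A word is reduced if its length equals the Coxeter length of its product. -/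
def IsReducedWord (κ : ℕ) (L : List (ZMod κ)) : Prop :=
  len κ (wordProd κ L) = L.length

/-- Fully commutative: any reduced word for w can be obtained from any other
using only commutation moves. -/
def FullyComm (κ : ℕ) (w : Hw κ → Hw κ) : Prop :=
  ∀ L1 L2 : List (ZMod κ),
    IsReducedWord κ L1 → wordProd κ L1 = w →
    IsReducedWord κ L2 → wordProd κ L2 = w →
    Relation.ReflTransGen (CommMove κ) L1 L2

/-! ## Hooks, bottom set and weights attached to a cylindric diagram -/

/-- α(x) = α_{con(x)}. -/
def alC (m l : ℕ) (x : Cyl m l) : Hw (m + l) := alphaR (m + l) (con m l x)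

/-- arm(x) = {x + π(0,k) : k ≥ 1} ∩ θ. -/
def armSet (m l : ℕ) (θ : Set (Cyl m l)) (x : Cyl m l) : Set (Cyl m l) :=
  {y | y ∈ θ ∧ ∃ k : ℕ, 1 ≤ k ∧ y = x + pr m l (0, (k : ℤ))}

/-- leg(x) = {x + π(k,0) : k ≥ 1} ∩ θ. -/
def legSet (m l : ℕ) (θ : Set (Cyl m l)) (x : Cyl m l) : Set (Cyl m l) :=
  {y | y ∈ θ ∧ ∃ k : ℕ, 1 ≤ k ∧ y = x + pr m l ((k : ℤ), 0)}

/-- The colored hook length hk(x) = α(x) + Σ_{y∈arm(x)} α(y) + Σ_{y∈leg(x)} α(y). -/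
noncomputable def hk (m l : ℕ) (θ : Set (Cyl m l)) (x : Cyl m l) : Hw (m + l) :=
  alC m l x + (∑ᶠ y ∈ armSet m l θ x, alC m l y) + (∑ᶠ y ∈ legSet m l θ x, alC m l y)

/-- x is the minimum cell b_i of content i in θ. -/
def IsBottomCell (m l : ℕ) (θ : Set (Cyl m l)) (i : ZMod (m + l)) (x : Cyl m l) : Prop :=
  x ∈ θ ∧ con m l x = i ∧ ∀ y ∈ θ, con m l y = i → cle m l x y

/-- The bottom set Γ = {b_i : i ∈ ℤ/κℤ}. -/
def btm (m l : ℕ) (θ : Set (Cyl m l)) : Set (Cyl m l) :=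
  {x | ∃ i, IsBottomCell m l θ i x}

/-- The maximal elements Γ_max of the bottom set. -/
def btmMax (m l : ℕ) (θ : Set (Cyl m l)) : Set (Cyl m l) :=
  {x | x ∈ btm m l θ ∧ ∀ y ∈ btm m l θ, cle m l x y → y = x}

/-- The minimal elements Γ_min of the bottom set. -/
def btmMin (m l : ℕ) (θ : Set (Cyl m l)) : Set (Cyl m l) :=
  {x | x ∈ btm m l θ ∧ ∀ y ∈ btm m l θ, cle m l y x → y = x}

open Classical in
/-- The coefficient a_i of Λ_i in the predominant weight P_θ:
1 if b_i ∈ Γ_max, -1 if b_i ∈ Γ_min, 0 otherwise. -/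
noncomputable def aC (m l : ℕ) (θ : Set (Cyl m l)) (i : ZMod (m + l)) : ℚ :=
  if ∃ x, IsBottomCell m l θ i x ∧ x ∈ btmMax m l θ then 1
  else if ∃ x, IsBottomCell m l θ i x ∧ x ∈ btmMin m l θ then -1 else 0

/-- The pairing ⟨P_θ, β^∨⟩ = Σ_i a_i k_i for β = Σ_i k_i α_i,
where P_θ = Σ_i a_i Λ_i (since ⟨Λ_i, α_j^∨⟩ = δ_{ij} and ⟨Λ_i, d⟩ = 0). -/
noncomputable def pairP (m l : ℕ) (θ : Set (Cyl m l)) (β : Hw (m + l)) : ℚ :=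
  ∑ᶠ i, aC m l θ i * β.1 i

/-- D(P_θ) = {α ∈ R₊ : ⟨P_θ, α^∨⟩ = -1}. -/
def DSet (m l : ℕ) (θ : Set (Cyl m l)) : Set (Hw (m + l)) :=
  {β | β ∈ Rpos (m + l) ∧ pairP m l θ β = -1}

/-- The "inversion set" R(w_θ) = {hk(x) : x ∈ θ}. -/
def RwTheta (m l : ℕ) (θ : Set (Cyl m l)) : Set (Hw (m + l)) := hk m l θ '' θ

/-- The set Π_θ = Π_θ^0 ∪ Π_θ^arm ∪ Π_θ^leg. -/
def PiTheta (m l : ℕ) (θ : Set (Cyl m l)) : Set (Hw (m + l)) :=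
  {v | ∃ x, x ∈ btm m l θ ∧ x ∉ btmMax m l θ ∧ x ∉ btmMin m l θ ∧ v = alC m l x} ∪
  {v | ∃ x, x ∈ btmMax m l θ ∧ v = alC m l x + ∑ᶠ y ∈ armSet m l θ x, alC m l y} ∪
  {v | ∃ x, x ∈ btmMax m l θ ∧ v = alC m l x + ∑ᶠ y ∈ legSet m l θ x, alC m l y}

/-- The modified order ⊴ on R(w_θ): α ⊴ β iff β - α ∈ Σ_{γ∈Π_θ} ℤ≥0 γ. -/
def trile (m l : ℕ) (θ : Set (Cyl m l)) (α β : Hw (m + l)) : Prop :=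
  β - α ∈ AddSubmonoid.closure (PiTheta m l θ)

/-! ## Standard tableaux (encoded by the inverse enumeration e = T⁻¹ : ℤ≥1 → θ) -/

/-- A standard tableau on θ, given by the enumeration e = T⁻¹ : {1,2,…} → θ.
This is precisely the data of an order-preserving bijection T : θ → ℤ≥1. -/
def IsTableau (m l : ℕ) (θ : Set (Cyl m l)) (e : ℕ → Cyl m l) : Prop :=
  Set.InjOn e {a : ℕ | 1 ≤ a} ∧ e '' {a : ℕ | 1 ≤ a} = θ ∧
  ∀ a b : ℕ, 1 ≤ a → 1 ≤ b → cle m l (e a) (e b) → e a ≠ e b → a < b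

/-- A standard tableau on a finite (skew) diagram ξ with |ξ| = n, encoded by
the enumeration e = S⁻¹ : {1,…,n} → ξ. -/
def IsTableauOn (m l : ℕ) (ξ : Set (Cyl m l)) (n : ℕ) (e : ℕ → Cyl m l) : Prop :=
  Set.InjOn e (Set.Icc 1 n) ∧ e '' Set.Icc 1 n = ξ ∧
  ∀ a b : ℕ, a ∈ Set.Icc 1 n → b ∈ Set.Icc 1 n → cle m l (e a) (e b) → e a ≠ e b → a < b

/-- The word (con(e 1), con(e 2), …, con(e n)). -/
def tabWord (m l : ℕ) (e : ℕ → Cyl m l) (n : ℕ) : List (ZMod (m + l)) :=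
  (List.range n).map (fun k => con m l (e (k + 1)))

/-- The semi-infinite Bruhat interval [e, w_{θ,T}) = ⋃_{n≥1} [e, w_{θ,T}[n]]. -/
def semiInt (m l : ℕ) (e : ℕ → Cyl m l) : Set (Hw (m + l) → Hw (m + l)) :=
  ⋃ n ∈ {n : ℕ | 1 ≤ n}, bint (m + l) (wordProd (m + l) (tabWord m l e n))

/-- w is P_θ-pluscule: ⟨P_θ, α^∨⟩ = -1 for every α ∈ R(w). -/
def Pluscule (m l : ℕ) (θ : Set (Cyl m l)) (w : Hw (m + l) → Hw (m + l)) : Prop :=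
  ∀ β ∈ invSet (m + l) w, pairP m l θ β = -1

/-- The generating relation of the heap order ⪯_T on ℤ≥1. -/
def heapRel (m l : ℕ) (e : ℕ → Cyl m l) (a b : ℕ) : Prop :=
  1 ≤ a ∧ a ≤ b ∧
    (con m l (e a) = con m l (e b) ∨
      sFun (m + l) (con m l (e a)) ∘ sFun (m + l) (con m l (e b)) ≠
        sFun (m + l) (con m l (e b)) ∘ sFun (m + l) (con m l (e a)))

/-- The generating relation of the heap order ≤^hp on R(w_θ):
α ≤ β whenever β - α ∈ Q₊ (the ordinary order) and ⟨α, β^∨⟩ ≠ 0. -/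
def hpRel (m l : ℕ) (θ : Set (Cyl m l)) (α β : Hw (m + l)) : Prop :=
  α ∈ RwTheta m l θ ∧ β ∈ RwTheta m l θ ∧ β - α ∈ QPos (m + l) ∧
    pairCo (m + l) α β ≠ 0

/-- v is the Weyl group element w_ξ of a proper order ideal ξ of θ. -/
def IsIdealWord (m l : ℕ) (θ ξ : Set (Cyl m l)) (v : Hw (m + l) → Hw (m + l)) : Prop :=
  IsProperIdealOf m l θ ξ ∧
    ∃ n e, IsTableauOn m l ξ n e ∧ v = wordProd (m + l) (tabWord m l e n)

/-- A proper order ideal of the poset (R(w_θ), ⊴). -/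
def IsProperIdealOfRw (m l : ℕ) (θ : Set (Cyl m l)) (J : Set (Hw (m + l))) : Prop :=
  J ⊆ RwTheta m l θ ∧ J ≠ RwTheta m l θ ∧
    ∀ β ∈ J, ∀ α ∈ RwTheta m l θ, trile m l θ α β → α ∈ J


/-! ### Order and content on the cylinder -/

section Cylinder

variable {m l : ℕ}

/-- The unit step `π(0,1)` along a row of the cylinder. -/
def rowStep (m l : ℕ) : Cyl m l := pr m l (0, 1)

/-- The unit step `π(1,0)` along a column of the cylinder. -/
def colStep (m l : ℕ) : Cyl m l := pr m l (1, 0)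

lemma steps_eq (a b : ℕ) :
    a • rowStep m l + b • colStep m l = pr m l ((b : ℤ), (a : ℤ)) := by
  rw [rowStep, colStep, ← map_nsmul, ← map_nsmul, ← map_add]
  congr 1
  ext <;> simp

lemma pr_surj (x : Cyl m l) : ∃ a, pr m l a = x := QuotientAddGroup.mk'_surjective _ x

lemma con_pr (a : Z2) : con m l (pr m l a) = ((a.2 - a.1 : ℤ) : ZMod (m + l)) := rfl

lemma con_rowStep : con m l (rowStep m l) = 1 := by simp [rowStep, con_pr]

lemma con_colStep : con m l (colStep m l) = -1 := by simp [colStep, con_pr]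

lemma pr_eq_zero {a : Z2} : pr m l a = 0 ↔ ∃ t : ℤ, t • om m l = a := by
  rw [pr, QuotientAddGroup.mk'_apply, QuotientAddGroup.eq_zero_iff,
    AddSubgroup.mem_zmultiples_iff]

/-- The order on the cylinder has no cycles: this is where `m, ℓ ≥ 1` enters. -/
lemma steps_eq_zero (hm : 1 ≤ m) (hl : 1 ≤ l) (a b : ℕ)
    (h : a • rowStep m l + b • colStep m l = 0) : a = 0 ∧ b = 0 := by
  rw [steps_eq, pr_eq_zero] at h
  obtain ⟨t, ht⟩ := h
  have h1 : t * m = b := by simpa [om] using congrArg Prod.fst ht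
  have h2 : -(t * l) = a := by simpa [om] using congrArg Prod.snd ht
  have hm' : (1 : ℤ) ≤ m := by exact_mod_cast hm
  have hl' : (1 : ℤ) ≤ l := by exact_mod_cast hl
  have ht0 : t = 0 := by
    rcases lt_trichotomy t 0 with h | h | h
    · nlinarith
    · exact h
    · nlinarith
  subst ht0
  constructor <;> omega

/-- The kernel of the content map is generated by the diagonal step `π(1,1)`. -/
lemma con_eq_zero (z : Cyl m l) (h : con m l z = 0) :
    ∃ j : ℤ, z = j • (rowStep m l + colStep m l) := by
  obtain ⟨a, rfl⟩ := pr_surj z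
  rw [con_pr, ZMod.intCast_zmod_eq_zero_iff_dvd] at h
  obtain ⟨t, ht⟩ := h
  -- `b - a = t κ`, and `ω` has content `-κ`, so adding `t ω` brings the cell to the main diagonal.
  refine ⟨a.1 + t * m, ?_⟩
  rw [rowStep, colStep, ← map_add, ← map_zsmul, ← sub_eq_zero, ← map_sub, pr_eq_zero]
  refine ⟨-t, ?_⟩
  push_cast at ht
  ext
  · simp [om]
  · simp [om]; linarith

lemma cle_steps (x : Cyl m l) (a b : ℕ) :
    cle m l (x + (a • rowStep m l + b • colStep m l)) x := by
  obtain ⟨c, rfl⟩ := pr_surj x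
  refine ⟨c + ((b : ℤ), (a : ℤ)), c, ?_, rfl, ?_⟩
  · rw [steps_eq, map_add]
  · constructor <;> simp

/-- The order filters of the cylinder, expressed through row and column steps. -/
def UpClosed (θ : Set (Cyl m l)) : Prop :=
  ∀ (x : Cyl m l) (a b : ℕ), x + (a • rowStep m l + b • colStep m l) ∈ θ → x ∈ θ

end Cylinder

/-! ### Pairings of segments of simple roots -/

section Roots

variable {κ : ℕ}

lemma pairSimple_add [NeZero κ] (ζ ξ : Hw κ) (i : ZMod κ) :
    pairSimple κ (ζ + ξ) i = pairSimple κ ζ i + pairSimple κ ξ i := by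
  simp only [pairSimple, finsum_eq_sum_of_fintype, Prod.fst_add, Prod.snd_add, Pi.add_apply,
    add_mul, Finset.sum_add_distrib]
  ring

lemma pairSimple_alphaR [NeZero κ] (i j : ZMod κ) : pairSimple κ (alphaR κ j) i = cartan κ i j := by
  simp [pairSimple, alphaR, finsum_eq_sum_of_fintype, Pi.single_apply]

lemma cartan_eq {ε : ZMod κ} (hε : ε = 1 ∨ ε = -1) (i j : ZMod κ) :
    cartan κ i j = 2 * (if i = j then 1 else 0) - (if i = j + ε then 1 else 0)
      - (if i = j - ε then 1 else 0) := by
  have h1 : (i - j = 1) = (i = j + 1) := by rw [sub_eq_iff_eq_add, add_comm]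
  have h2 : (i - j = -1) = (i = j - 1) := by
    rw [sub_eq_iff_eq_add, add_comm, ← sub_eq_add_neg]
  rcases hε with rfl | rfl
  · simp only [cartan, h1, h2]
    split_ifs <;> norm_num
  · simp only [cartan, h1, h2, sub_neg_eq_add, ← sub_eq_add_neg]
    split_ifs <;> norm_num

/-- The sum of the `R` simple roots with indices `c, c + ε, …, c + (R - 1)ε`. -/
noncomputable def seg (κ : ℕ) (ε c : ZMod κ) (R : ℕ) : Hw κ :=
  ∑ k ∈ Finset.range R, alphaR κ (c + k • ε)

lemma seg_one (ε c : ZMod κ) : seg κ ε c 1 = alphaR κ c := by simp [seg]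

lemma seg_succ (ε c : ZMod κ) (R : ℕ) :
    seg κ ε c (R + 1) = seg κ ε c R + alphaR κ (c + R • ε) := Finset.sum_range_succ _ _

/-- The pairing of a segment with a simple coroot only sees the two ends of the segment. -/
lemma pairSimple_seg [NeZero κ] {ε : ZMod κ} (hε : ε = 1 ∨ ε = -1) (c i : ZMod κ) (R : ℕ) :
    pairSimple κ (seg κ ε c (R + 1)) i =
      (if i = c then 1 else 0) - (if i = c - ε then 1 else 0)
      + (if i = c + R • ε then 1 else 0) - (if i = c + (R + 1) • ε then 1 else 0) := by
  induction R with
  | zero =>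
    rw [seg_one, pairSimple_alphaR, cartan_eq hε]
    simp only [zero_smul, add_zero, zero_add, one_smul]
    ring
  | succ R ih =>
    rw [seg_succ, pairSimple_add, ih, pairSimple_alphaR, cartan_eq hε]
    have e1 : c + (R + 1) • ε - ε = c + R • ε := by rw [succ_nsmul]; abel
    have e2 : c + (R + 1) • ε + ε = c + (R + 1 + 1) • ε := by rw [succ_nsmul _ (R + 1)]; abel
    rw [e1, e2]
    ring

end Roots

/-! ### Hooks and removal of a minimal cell -/

section Hooks

variable {m l : ℕ}

/-- Here `g` is a row or column step and `R` is the number of cells of `θ` met from `x` on in the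
direction of `g`; the set summed over is then the arm or the leg of `x`. -/
lemma sum_direction {θ : Set (Cyl m l)} {x g : Cyl m l} {R : ℕ}
    (hg : ∀ k : ℕ, k • g = 0 → k = 0) (hR : ∀ k : ℕ, x + k • g ∈ θ ↔ k < R + 1) :
    alC m l x + ∑ᶠ y ∈ {y | y ∈ θ ∧ ∃ k : ℕ, 1 ≤ k ∧ y = x + k • g}, alC m l y
      = seg (m + l) (con m l g) (con m l x) (R + 1) := by
  classical
  have hinj : Function.Injective fun k : ℕ => x + (k + 1) • g := by
    have key : ∀ a b : ℕ, a ≤ b → x + (a + 1) • g = x + (b + 1) • g → a = b := by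
      intro a b hab h
      obtain ⟨d, rfl⟩ := Nat.exists_eq_add_of_le hab
      have h0 : d • g = 0 := by
        have h' := add_left_cancel h
        rw [show a + d + 1 = (a + 1) + d by ring, add_nsmul _ (a + 1)] at h'
        simpa using h'
      have := hg d h0
      omega
    intro a b h
    rcases le_total a b with hab | hab
    · exact key a b hab h
    · exact (key b a hab h.symm).symm
  have hset : {y | y ∈ θ ∧ ∃ k : ℕ, 1 ≤ k ∧ y = x + k • g}
      = ((Finset.range R).image fun k : ℕ => x + (k + 1) • g : Finset (Cyl m l)) := by
    ext y
    simp only [Set.mem_ofPred_eq, Finset.coe_image, Finset.coe_range, Set.mem_image, Set.mem_Iio]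
    constructor
    · rintro ⟨hy, k, hk, rfl⟩
      refine ⟨k - 1, ?_, ?_⟩
      · have := (hR k).1 hy
        omega
      · rw [Nat.sub_add_cancel hk]
    · rintro ⟨k, hk, rfl⟩
      exact ⟨(hR _).2 (by omega), k + 1, by omega, rfl⟩
  rw [hset, finsum_mem_coe_finset, Finset.sum_image hinj.injOn, seg, Finset.sum_range_succ']
  simp [alC, add_comm]

/-- A hook is a segment of simple roots; `α(x)`, the common start of its two halves, is counted
twice on the right-hand side. -/
lemma hk_eq (hm : 1 ≤ m) (hl : 1 ≤ l) {θ : Set (Cyl m l)} {x : Cyl m l} {R S : ℕ}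
    (hR : ∀ k : ℕ, x + k • rowStep m l ∈ θ ↔ k < R + 1)
    (hS : ∀ k : ℕ, x + k • colStep m l ∈ θ ↔ k < S + 1) :
    hk m l θ x + alC m l x
      = seg (m + l) 1 (con m l x) (R + 1) + seg (m + l) (-1) (con m l x) (S + 1) := by
  have h1 := sum_direction
    (fun k h => (steps_eq_zero hm hl k 0 (by simpa using h)).1) hR
  have h2 := sum_direction
    (fun k h => (steps_eq_zero hm hl 0 k (by simpa using h)).2) hS
  rw [con_rowStep] at h1
  rw [con_colStep] at h2
  rw [← h1, ← h2]
  have ha : armSet m l θ x = {y | y ∈ θ ∧ ∃ k : ℕ, 1 ≤ k ∧ y = x + k • rowStep m l} := by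
    ext y
    have h : ∀ k : ℕ, pr m l (0, (k : ℤ)) = k • rowStep m l := fun k => by
      simpa using (steps_eq (m := m) (l := l) k 0).symm
    simp only [armSet, h]
  have hb : legSet m l θ x = {y | y ∈ θ ∧ ∃ k : ℕ, 1 ≤ k ∧ y = x + k • colStep m l} := by
    ext y
    have h : ∀ k : ℕ, pr m l ((k : ℤ), 0) = k • colStep m l := fun k => by
      simpa using (steps_eq (m := m) (l := l) 0 k).symm
    simp only [legSet, h]
  rw [hk, ha, hb]
  abel

/-- The end of a row (or column) before and after removing a minimal cell `p` of `θ`. Here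
`{g, g'}` are the two unit steps, in either order, and `R + 1` counts the cells of `θ \ {p}` from
`x` on in the direction `g`. The last of these does not have the content of `p`, and the number of
cells grows by one in `θ` exactly when the next cell has the content of `p`. -/
lemma end_spec {θ : Set (Cyl m l)} {x p g g' : Cyl m l} {R : ℕ}
    (h0 : ∀ a b : ℕ, a • g + b • g' = 0 → a = 0 ∧ b = 0)
    (hker : ∀ z : Cyl m l, con m l z = 0 → ∃ j : ℤ, z = j • (g + g'))
    (hU : ∀ (y : Cyl m l) (a b : ℕ), y + (a • g + b • g') ∈ θ → y ∈ θ)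
    (hp : p ∈ θ) (hmin : ∀ a b : ℕ, p + (a • g + b • g') ∈ θ → a = 0 ∧ b = 0)
    (hR : ∀ k : ℕ, x + k • g ∈ θ \ {p} ↔ k < R + 1) :
    con m l p ≠ con m l x + R • con m l g ∧
    ∀ k : ℕ, x + k • g ∈ θ ↔
      k < R + 1 + (if con m l p = con m l x + (R + 1) • con m l g then 1 else 0) := by
  have hlast : x + R • g ∈ θ \ {p} := (hR R).2 (by omega)
  have hnext : x + (R + 1) • g ∉ θ \ {p} := fun h => by simpa using (hR _).1 h
  have diag : ∀ k : ℕ, con m l p = con m l x + k • con m l g →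
      ∃ j : ℤ, x + k • g = p + j • (g + g') := by
    intro k h
    obtain ⟨j, hj⟩ := hker (x + k • g - p) (by rw [map_sub, map_add, map_nsmul, h, sub_self])
    exact ⟨j, by rw [← hj]; abel⟩
  have up : ∀ (y : Cyl m l) (a b : ℕ), p = y + (a • g + b • g') → (a ≠ 0 ∨ b ≠ 0) →
      y ∈ θ \ {p} := by
    intro y a b h hab
    refine ⟨hU y a b (h ▸ hp), ?_⟩
    rintro rfl
    have := h0 a b (by simpa using h.symm)
    omega
  have split : ∀ j : ℤ, (∃ a : ℕ, j = a + 1) ∨ j = 0 ∨ ∃ a : ℕ, j = -(a + 1) := by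
    intro j
    rcases lt_trichotomy j 0 with h | h | h
    · exact Or.inr (Or.inr ⟨(-j - 1).toNat, by omega⟩)
    · exact Or.inr (Or.inl h)
    · exact Or.inl ⟨(j - 1).toNat, by omega⟩
  have hne : con m l p ≠ con m l x + R • con m l g := by
    intro h
    obtain ⟨j, hj⟩ := diag R h
    rcases split j with ⟨a, rfl⟩ | rfl | ⟨a, rfl⟩
    · have h1 : x + R • g = p + ((a + 1) • g + (a + 1) • g') := by
        rw [hj, ← nsmul_add, ← natCast_zsmul (g + g') (a + 1)]
        push_cast
        rfl
      have := hmin (a + 1) (a + 1) (h1 ▸ hlast.1)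
      omega
    · exact hlast.2 (by simpa using hj)
    · -- the next cell still dominates `p` strictly, so it belongs to `θ \ {p}`
      refine hnext (up _ a (a + 1) ?_ (by omega))
      rw [succ_nsmul, ← add_assoc x, hj]
      rw [neg_smul, add_smul, natCast_zsmul, one_smul, nsmul_add, succ_nsmul]
      abel
  have hiff : con m l p = con m l x + (R + 1) • con m l g → x + (R + 1) • g = p := by
    intro h
    obtain ⟨j, hj⟩ := diag (R + 1) h
    rcases split j with ⟨a, rfl⟩ | rfl | ⟨a, rfl⟩
    · -- the last cell of `θ \ {p}` would lie strictly below `p`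
      have h1 : x + R • g = p + (a • g + (a + 1) • g') := by
        rw [succ_nsmul, ← add_assoc] at hj
        rw [eq_sub_of_add_eq hj, add_zsmul, natCast_zsmul, one_zsmul, nsmul_add, succ_nsmul]
        abel
      have := hmin a (a + 1) (h1 ▸ hlast.1)
      omega
    · simpa using hj
    · refine absurd (up _ (a + 1) (a + 1) ?_ (by omega)) hnext
      rw [hj, ← nsmul_add, neg_smul]
      have : ((a : ℤ) + 1) • (g + g') = (a + 1) • (g + g') := by
        rw [← natCast_zsmul (g + g') (a + 1)]
        push_cast
        rfl
      rw [this]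
      abel
  refine ⟨hne, fun k => ?_⟩
  have down : ∀ a b : ℕ, a ≤ b → x + b • g ∈ θ → x + a • g ∈ θ := by
    intro a b hab h
    obtain ⟨d, rfl⟩ := Nat.exists_eq_add_of_le hab
    refine hU _ d 0 ?_
    rwa [zero_smul, add_zero, add_assoc, ← add_nsmul]
  split_ifs with hc
  · have hq := hiff hc
    constructor
    · intro hk
      by_contra hlt
      have h2 : x + (R + 1 + 1) • g ∈ θ := down _ k (by omega) hk
      rw [succ_nsmul, ← add_assoc, hq] at h2
      have := hmin 1 0 (by simpa using h2)
      omega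
    · intro hk
      exact down k (R + 1) (by omega) (hq ▸ hp)
  · constructor
    · intro hk
      by_contra hlt
      refine hnext ⟨down _ k (by omega) hk, fun h => hc ?_⟩
      rw [← Set.mem_singleton_iff.1 h, map_add, map_nsmul]
    · intro hk
      exact ((hR k).2 (by omega)).1

/-- Removing a minimal cell `p` changes the hooks of the other cells by the reflection `s(p)`. -/
lemma hk_erase (hm : 1 ≤ m) (hl : 1 ≤ l) {θ : Set (Cyl m l)} {x p : Cyl m l} {R S : ℕ}
    (hU : UpClosed θ) (hp : p ∈ θ)
    (hmin : ∀ a b : ℕ, p + (a • rowStep m l + b • colStep m l) ∈ θ → a = 0 ∧ b = 0)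
    (hR : ∀ k : ℕ, x + k • rowStep m l ∈ θ \ {p} ↔ k < R + 1)
    (hS : ∀ k : ℕ, x + k • colStep m l ∈ θ \ {p} ↔ k < S + 1) :
    hk m l θ x = sFun (m + l) (con m l p) (hk m l (θ \ {p}) x) := by
  have : NeZero (m + l) := ⟨by omega⟩
  obtain ⟨r1, r2⟩ := end_spec (steps_eq_zero hm hl) con_eq_zero hU hp hmin hR
  obtain ⟨s1, s2⟩ := end_spec (g := colStep m l) (g' := rowStep m l)
    (fun a b h => (steps_eq_zero hm hl b a (by rwa [add_comm])).symm)
    (fun z hz => by rw [add_comm]; exact con_eq_zero z hz)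
    (fun y a b h => hU y b a (by rwa [add_comm (b • _)])) hp
    (fun a b h => (hmin b a (by rwa [add_comm (b • _)])).symm) hS
  rw [con_rowStep] at r1 r2
  rw [con_colStep] at s1 s2
  have hsmall := hk_eq hm hl hR hS
  have hpair := congrArg (fun ζ => pairSimple (m + l) ζ (con m l p)) hsmall
  simp only [pairSimple_add, pairSimple_seg (Or.inl rfl), pairSimple_seg (Or.inr rfl), alC,
    pairSimple_alphaR, cartan_eq (ε := (1 : ZMod (m + l))) (Or.inl rfl), if_neg r1, if_neg s1,
    sub_neg_eq_add] at hpair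
  have grow : ∀ (ε : ZMod (m + l)) (N : ℕ),
      seg (m + l) ε (con m l x)
          (N + 1 + if con m l p = con m l x + (N + 1) • ε then 1 else 0)
        = seg (m + l) ε (con m l x) (N + 1)
          + (if con m l p = con m l x + (N + 1) • ε then (1 : ℚ) else 0)
            • alphaR (m + l) (con m l p) := by
    intro ε N
    split_ifs with h
    · rw [seg_succ, one_smul, ← h]
    · simp
  have hbig := hk_eq hm hl (θ := θ) (x := x)
    (R := R + if con m l p = con m l x + (R + 1) • (1 : ZMod (m + l)) then 1 else 0)
    (S := S + if con m l p = con m l x + (S + 1) • (-1 : ZMod (m + l)) then 1 else 0)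
    (fun k => by rw [r2 k, add_right_comm]) (fun k => by rw [s2 k, add_right_comm])
  rw [add_right_comm R, add_right_comm S, grow, grow] at hbig
  have hval : pairSimple (m + l) (hk m l (θ \ {p}) x) (con m l p)
      = -(if con m l p = con m l x + (R + 1) • (1 : ZMod (m + l)) then (1 : ℚ) else 0)
        - (if con m l p = con m l x + (S + 1) • (-1 : ZMod (m + l)) then (1 : ℚ) else 0) := by
    linarith
  rw [sFun, hval, eq_sub_of_add_eq hbig, eq_sub_of_add_eq hsmall]
  module

end Hooks

/-! ### Standard tableaux -/

section Tableaux

variable {m l : ℕ}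

/-- In a standard tableau, moving a positive number of steps away from a cell lowers its entry. -/
lemma tableau_lt (hm : 1 ≤ m) (hl : 1 ≤ l) {θ : Set (Cyl m l)} {e : ℕ → Cyl m l}
    (he : IsTableau m l θ e) {a b n : ℕ} (hn : 1 ≤ n) (hab : a ≠ 0 ∨ b ≠ 0)
    (h : e n + (a • rowStep m l + b • colStep m l) ∈ θ) :
    ∃ n', 1 ≤ n' ∧ n' < n ∧ e n' = e n + (a • rowStep m l + b • colStep m l) := by
  rw [← he.2.1] at h
  obtain ⟨n', hn', h⟩ := h
  refine ⟨n', hn', he.2.2 n' n hn' hn (h ▸ cle_steps _ a b) ?_, h⟩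
  intro h'
  rw [h'] at h
  have := steps_eq_zero hm hl a b (by simpa using h.symm)
  omega

lemma exists_end {θ : Set (Cyl m l)} {e : ℕ → Cyl m l} {g : Cyl m l}
    (hU : ∀ (y : Cyl m l) (a : ℕ), y + a • g ∈ θ → y ∈ θ)
    (hlt : ∀ n, 1 ≤ n → e n + g ∈ θ → ∃ n', 1 ≤ n' ∧ n' < n ∧ e n' = e n + g)
    {n : ℕ} (hn : 1 ≤ n) (hmem : e n ∈ θ) :
    ∃ R : ℕ, ∀ k : ℕ, e n + k • g ∈ θ ↔ k < R + 1 := by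
  classical
  have bound : ∀ k n : ℕ, 1 ≤ n → e n + k • g ∈ θ → k < n := by
    intro k
    induction k with
    | zero => intro n hn _; omega
    | succ k ih =>
      intro n hn h
      rw [succ_nsmul', ← add_assoc] at h
      obtain ⟨n', h1, h2, h3⟩ := hlt n hn (hU _ k h)
      have := ih n' h1 (h3 ▸ h)
      omega
  have hex : ∃ k : ℕ, e n + k • g ∉ θ := ⟨n, fun h => by simpa using bound n n hn h⟩
  have hpos : Nat.find hex ≠ 0 := by
    intro h
    have := Nat.find_spec hex
    rw [h] at this
    exact this (by simpa using hmem)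
  refine ⟨Nat.find hex - 1, fun k => ?_⟩
  rw [Nat.sub_add_cancel (Nat.one_le_iff_ne_zero.2 hpos)]
  constructor
  · intro h
    by_contra hk
    obtain ⟨d, rfl⟩ := Nat.exists_eq_add_of_le (not_lt.1 hk)
    refine Nat.find_spec hex (hU _ d ?_)
    rwa [add_assoc, ← add_nsmul]
  · intro h
    exact not_not.1 (Nat.find_min hex h)

lemma exists_ends (hm : 1 ≤ m) (hl : 1 ≤ l) {θ : Set (Cyl m l)} {e : ℕ → Cyl m l}
    (hU : UpClosed θ) (he : IsTableau m l θ e) {n : ℕ} (hn : 1 ≤ n) :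
    (∃ R : ℕ, ∀ k : ℕ, e n + k • rowStep m l ∈ θ ↔ k < R + 1) ∧
    ∃ S : ℕ, ∀ k : ℕ, e n + k • colStep m l ∈ θ ↔ k < S + 1 := by
  have hmem : e n ∈ θ := he.2.1 ▸ ⟨n, hn, rfl⟩
  constructor
  · refine exists_end (fun y a h => hU y a 0 (by simpa using h)) (fun n hn h => ?_) hn hmem
    simpa using tableau_lt hm hl he (a := 1) (b := 0) hn (by simp) (by simpa using h)
  · refine exists_end (fun y a h => hU y 0 a (by simpa using h)) (fun n hn h => ?_) hn hmem
    simpa using tableau_lt hm hl he (a := 0) (b := 1) hn (by simp) (by simpa using h)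

lemma first_minimal (hm : 1 ≤ m) (hl : 1 ≤ l) {θ : Set (Cyl m l)} {e : ℕ → Cyl m l}
    (he : IsTableau m l θ e) (a b : ℕ)
    (h : e 1 + (a • rowStep m l + b • colStep m l) ∈ θ) : a = 0 ∧ b = 0 := by
  by_contra hab
  obtain ⟨n', h1, h2, -⟩ := tableau_lt hm hl he le_rfl (by omega) h
  omega

lemma upClosed_erase {θ : Set (Cyl m l)} {p : Cyl m l} (hU : UpClosed θ)
    (hmin : ∀ a b : ℕ, p + (a • rowStep m l + b • colStep m l) ∈ θ → a = 0 ∧ b = 0) :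
    UpClosed (θ \ {p}) := by
  rintro x a b ⟨h1, h2⟩
  refine ⟨hU x a b h1, ?_⟩
  rintro rfl
  obtain ⟨rfl, rfl⟩ := hmin a b h1
  simp at h2

lemma tableau_erase {θ : Set (Cyl m l)} {e : ℕ → Cyl m l} (he : IsTableau m l θ e) :
    IsTableau m l (θ \ {e 1}) fun k => e (k + 1) := by
  obtain ⟨hinj, himg, hlt⟩ := he
  refine ⟨?_, ?_, ?_⟩
  · intro a _ b _ h
    have := hinj (show 1 ≤ a + 1 by omega) (show 1 ≤ b + 1 by omega) h
    omega
  · ext y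
    constructor
    · rintro ⟨a, ha, rfl⟩
      refine ⟨himg ▸ ⟨a + 1, show 1 ≤ a + 1 by omega, rfl⟩, fun h => ?_⟩
      have := hinj (show 1 ≤ a + 1 by omega) (show 1 ≤ 1 from le_rfl) h
      have ha' : 1 ≤ a := ha
      omega
    · rintro ⟨h1, h2⟩
      rw [← himg] at h1
      obtain ⟨a, ha, rfl⟩ := h1
      have ha' : 1 ≤ a := ha
      have hne : a ≠ 1 := by rintro rfl; exact h2 rfl
      exact ⟨a - 1, show 1 ≤ a - 1 by omega, by simp only [Nat.sub_add_cancel ha']⟩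
  · intro a b _ _ h1 h2
    have := hlt (a + 1) (b + 1) (by omega) (by omega) h1 h2
    omega

lemma wordProd_tabWord_succ (e : ℕ → Cyl m l) (n : ℕ) (ζ : Hw (m + l)) :
    wordProd (m + l) (tabWord m l e (n + 1)) ζ
      = sFun (m + l) (con m l (e 1))
          (wordProd (m + l) (tabWord m l (fun k => e (k + 1)) n) ζ) := by
  rw [tabWord, List.range_succ_eq_map, tabWord]
  simp [wordProd, Function.comp_def]

lemma hk_eq_wordProd (hm : 1 ≤ m) (hl : 1 ≤ l) (n : ℕ) : ∀ (θ : Set (Cyl m l))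
    (e : ℕ → Cyl m l), UpClosed θ → IsTableau m l θ e →
    hk m l θ (e (n + 1)) =
      wordProd (m + l) (tabWord m l e n) (alphaR (m + l) (con m l (e (n + 1)))) := by
  have : NeZero (m + l) := ⟨by omega⟩
  induction n with
  | zero =>
    intro θ e _ he
    have hmem : e 1 ∈ θ := he.2.1 ▸ ⟨1, le_refl 1, rfl⟩
    have h := hk_eq hm hl (θ := θ) (x := e 1) (R := 0) (S := 0)
      (fun k => ⟨fun hk => by
          have := first_minimal hm hl he k 0 (by simpa using hk)
          omega,
        fun hk => by
          obtain rfl : k = 0 := by omega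
          simpa using hmem⟩)
      (fun k => ⟨fun hk => by
          have := first_minimal hm hl he 0 k (by simpa using hk)
          omega,
        fun hk => by
          obtain rfl : k = 0 := by omega
          simpa using hmem⟩)
    rw [seg_one, seg_one] at h
    exact add_right_cancel h
  | succ n ih =>
    intro θ e hU he
    have hmin := first_minimal hm hl he
    have hU' := upClosed_erase hU hmin
    have he' := tableau_erase he
    obtain ⟨⟨R, hR⟩, S, hS⟩ := exists_ends hm hl hU' he' (n := n + 1) (by omega)
    rw [wordProd_tabWord_succ, ← ih _ _ hU' he']
    exact hk_erase hm hl hU (he.2.1 ▸ ⟨1, le_refl 1, rfl⟩) hmin hR hS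

end Tableaux

/-- Proposition 2.8: hk(x) = s(T⁻¹(1)) ⋯ s(T⁻¹(n-1)) α(T⁻¹(n)) where n = T(x).
(Here e = T⁻¹, so x = e n.) -/
theorem statement_6 (m l : ℕ) (hm : 1 ≤ m) (hl : 1 ≤ l)
    (θ : Set (Cyl m l)) (hθ : IsCylindric m l θ)
    (e : ℕ → Cyl m l) (he : IsTableau m l θ e) (n : ℕ) (hn : 1 ≤ n) :
    hk m l θ (e n) =
      wordProd (m + l) (tabWord m l e (n - 1)) (alphaR (m + l) (con m l (e n))) := by
  obtain ⟨n, rfl⟩ : ∃ k, n = k + 1 := ⟨n - 1, by omega⟩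
  exact hk_eq_wordProd hm hl n θ e
    (fun x a b h => hθ.2.2 _ h x (cle_steps x a b)) he

end CylPaper
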